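/- arXiv:1908.03604 — 3 statements merged into one kernel-verified Lean document; each statement's English description precedes it below -/
import Mathlib

section
/- Let N ≥ 1 be a natural number, let c : ℤ → ℂ be N-periodic (c(n+N) = c(n) for all n ∈ ℤ), and let α ∈ ℂ∖ℤ. Then the symmetric partial sums ∑_{n=−M}^{M} sinc(α−n)·c(n) converge as M → ∞, and the limit equals (1/N)·∑_{n=0}^{N−1} sin(π(α−n))·cot(π(α−n)/N)·c(n) if N is even, and (1/N)·∑_{n=0}^{N−1} sin(π(α−n))·csc(π(α−n)/N)·c(n) if N is odd. -/
open Filter Finset Topology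

/-- The normalized sinc function `sinc z = sin(πz)/(πz)`, with `sinc 0 = 1`. -/
noncomputable def csinc (z : ℂ) : ℂ :=
  if z = 0 then 1 else Complex.sin ((Real.pi : ℂ) * z) / ((Real.pi : ℂ) * z)

lemma aux_sum_Ico_add (F : ℤ → ℂ) (a b d : ℤ) (h1 : a ≤ b) (h2 : b ≤ d) :
    ∑ n ∈ Finset.Ico a d, F n = ∑ n ∈ Finset.Ico a b, F n + ∑ n ∈ Finset.Ico b d, F n := by
  rw [← Finset.Ico_union_Ico_eq_Ico h1 h2, Finset.sum_union]
  exact Finset.Ico_disjoint_Ico_consecutive a b d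

lemma aux_sum_Ico_range {E : Type*} [AddCommMonoid E] (F : ℤ → E) (a : ℤ) (P : ℕ) :
    ∑ n ∈ Finset.Ico a (a + P), F n = ∑ j ∈ Finset.range P, F (a + j) := by
  symm
  refine Finset.sum_bij (fun j _ => a + (j : ℤ)) ?_ ?_ ?_ ?_
  · intro j hj
    simp only [Finset.mem_range] at hj
    simp only [Finset.mem_Ico]
    omega
  · intro i _ j _ h
    omega
  · intro n hn
    simp only [Finset.mem_Ico] at hn
    exact ⟨(n - a).toNat, by simp only [Finset.mem_range]; omega, by omega⟩
  · intros
    rfl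

lemma aux_block (F : ℤ → ℂ) (P : ℕ) (K : ℕ) :
    ∑ n ∈ Finset.Ico (-((P : ℤ) * K)) ((P : ℤ) * (K + 1)), F n =
      ∑ r ∈ Finset.range P, (F r + ∑ k ∈ Finset.range K,
        (F (r + P * (k + 1)) + F (r - P * (k + 1)))) := by
  induction K with
  | zero =>
    have := aux_sum_Ico_range F 0 P
    simpa using this
  | succ K ih =>
    have hP : (0 : ℤ) ≤ P := by positivity
    have hK : (0 : ℤ) ≤ P * K := by positivity
    rw [aux_sum_Ico_add F _ (-((P : ℤ) * K)) _ (by push_cast; nlinarith)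
      (by push_cast; nlinarith), aux_sum_Ico_add F (-((P : ℤ) * K)) ((P : ℤ) * (K + 1)) _
      (by nlinarith) (by push_cast; nlinarith), ih]
    have e1 := aux_sum_Ico_range F (-((P : ℤ) * (K + 1))) P
    have e2 := aux_sum_Ico_range F ((P : ℤ) * (K + 1)) P
    rw [show -((P : ℤ) * (K + 1)) + P = -(P * K) by ring] at e1
    rw [show ((P : ℤ) * (K + 1)) + P = P * (K + 1 + 1) by ring] at e2
    push_cast
    rw [e1, e2, ← Finset.sum_add_distrib, ← Finset.sum_add_distrib]
    refine Finset.sum_congr rfl fun r _ => ?_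
    rw [Finset.sum_range_succ]
    rw [show -((P : ℤ) * (K + 1)) + r = r - P * (K + 1) by ring,
      show ((P : ℤ) * (K + 1)) + r = r + P * (K + 1) by ring]
    ring

lemma aux_short (F : ℤ → ℂ) (P : ℕ) (a b : ℤ) (h : b ≤ a + P) :
    ‖∑ n ∈ Finset.Ico a b, F n‖ ≤ ∑ j ∈ Finset.range P, ‖F (a + j)‖ := by
  refine (norm_sum_le _ _).trans ?_
  rw [← aux_sum_Ico_range (fun n => ‖F n‖) a P]
  exact Finset.sum_le_sum_of_subset_of_nonneg (Finset.Ico_subset_Ico le_rfl h)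
    fun _ _ _ => norm_nonneg _

lemma aux_limit (F : ℤ → ℂ) (P : ℕ) (hP : 1 ≤ P)
    (h1 : Tendsto F atTop (𝓝 0)) (h2 : Tendsto F atBot (𝓝 0)) (L : ℂ)
    (hL : Tendsto (fun K : ℕ => ∑ n ∈ Finset.Ico (-((P : ℤ) * K)) ((P : ℤ) * (K + 1)), F n)
      atTop (𝓝 L)) :
    Tendsto (fun M : ℕ => ∑ n ∈ Finset.Icc (-(M : ℤ)) (M : ℤ), F n) atTop (𝓝 L) := by
  have hdiv : Tendsto (fun M : ℕ => M / P) atTop atTop := Nat.tendsto_div_const_atTop (by omega)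
  have hleft : Tendsto (fun M : ℕ => ∑ n ∈ Finset.Ico (-(M : ℤ)) (-((P : ℤ) * (M / P : ℕ))), F n)
      atTop (𝓝 0) := by
    refine squeeze_zero_norm (a := fun M : ℕ => ∑ j ∈ Finset.range P, ‖F (-(M : ℤ) + j)‖) ?_ ?_
    · intro M
      apply aux_short
      have := Nat.div_add_mod M P
      have := Nat.mod_lt M (show P > 0 by omega)
      zify at *
      linarith
    · rw [← Finset.sum_const_zero (s := Finset.range P)]
      refine tendsto_finsetSum _ fun j _ => ?_
      rw [← norm_zero (E := ℂ)]
      refine (h2.comp ?_).norm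
      exact tendsto_atBot_add_const_right _ _
        (tendsto_neg_atTop_atBot.comp tendsto_natCast_atTop_atTop)
  have hright : Tendsto (fun M : ℕ => ∑ n ∈ Finset.Ico ((M : ℤ) + 1)
      ((P : ℤ) * ((M / P : ℕ) + 1)), F n) atTop (𝓝 0) := by
    refine squeeze_zero_norm (a := fun M : ℕ => ∑ j ∈ Finset.range P, ‖F (((M : ℤ) + 1) + j)‖) ?_ ?_
    · intro M
      apply aux_short
      have := Nat.div_add_mod M P
      have := Nat.mod_lt M (show P > 0 by omega)
      zify at *
      have hm : (0 : ℤ) ≤ (M : ℤ) % P := Int.emod_nonneg _ (by omega)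
      rw [mul_add]
      linarith
    · rw [← Finset.sum_const_zero (s := Finset.range P)]
      refine tendsto_finsetSum _ fun j _ => ?_
      rw [← norm_zero (E := ℂ)]
      refine (h1.comp ?_).norm
      exact tendsto_atTop_add_const_right _ _
        (tendsto_atTop_add_const_right _ _ tendsto_natCast_atTop_atTop)
  have key := ((hL.comp hdiv).add hleft).sub hright
  rw [add_zero, sub_zero] at key
  refine key.congr fun M => ?_
  have e1 := Nat.div_add_mod M P
  have e2 := Nat.mod_lt M (show P > 0 by omega)
  simp only [Function.comp]
  generalize M / P = K at *
  zify at e1 e2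
  have hPK : (0 : ℤ) ≤ P * K := by positivity
  have hm : (0 : ℤ) ≤ (M : ℤ) % P := Int.emod_nonneg _ (by omega)
  have hIcc : Finset.Icc (-(M : ℤ)) M = Finset.Ico (-(M : ℤ)) (M + 1) := by
    ext; simp only [Finset.mem_Icc, Finset.mem_Ico]; omega
  rw [hIcc, aux_sum_Ico_add F (-(M : ℤ)) (-((P : ℤ) * K)) (M + 1) (by linarith) (by linarith),
    aux_sum_Ico_add F (-((P : ℤ) * K)) (M + 1) ((P : ℤ) * (K + 1)) (by linarith) (by linarith)]
  ring

lemma aux_periodic (P : ℕ) (hP : 1 ≤ P) (g : ℤ → ℂ)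
    (hg : ∀ n : ℤ, g (n + P) = g n) (α : ℂ) (hα : ∀ m : ℤ, α ≠ (m : ℂ)) :
    Tendsto (fun M : ℕ => ∑ n ∈ Finset.Icc (-(M : ℤ)) (M : ℤ),
        g n / ((Real.pi : ℂ) * (α - n))) atTop
      (𝓝 ((1 / (P : ℂ)) * ∑ n ∈ Finset.range P,
        g n * Complex.cot ((Real.pi : ℂ) * (α - n) / P))) := by
  have hpi : (Real.pi : ℂ) ≠ 0 := by exact_mod_cast Real.pi_ne_zero
  have hP0 : (P : ℂ) ≠ 0 := by exact_mod_cast (show P ≠ 0 by omega)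
  have hper : Function.Periodic g (P : ℤ) := hg
  have hbd : ∀ n : ℤ, ‖g n‖ ≤ ∑ r ∈ Finset.range P, ‖g r‖ := by
    intro n
    have h0 : 0 ≤ n % (P : ℤ) := Int.emod_nonneg _ (by omega)
    have h1 : n % (P : ℤ) < P := Int.emod_lt_of_pos _ (by omega)
    have e : g n = g ((n % (P : ℤ)).toNat : ℕ) := by
      rw [Int.toNat_of_nonneg h0]
      have := hper.int_mul (n / (P : ℤ)) (n % P)
      rw [← this]
      congr 1
      have := Int.emod_add_mul_ediv n P
      simp only [Int.cast_id]
      linarith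
    rw [e]
    exact Finset.single_le_sum (f := fun r : ℕ => ‖g r‖) (fun _ _ => norm_nonneg _)
      (Finset.mem_range.2 (by omega))
  have hlim : ∀ l : Filter ℤ, Tendsto (fun n : ℤ => ‖α - (n : ℂ)‖) l atTop →
      Tendsto (fun n : ℤ => g n / ((Real.pi : ℂ) * (α - n))) l (𝓝 0) := by
    intro l hl
    refine squeeze_zero_norm
      (a := fun n : ℤ => (∑ r ∈ Finset.range P, ‖g r‖) / (Real.pi * ‖α - (n : ℂ)‖)) ?_ ?_
    · intro n
      rw [norm_div, norm_mul, Complex.norm_real, Real.norm_of_nonneg Real.pi_pos.le]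
      gcongr
      exact hbd n
    · exact (hl.const_mul_atTop Real.pi_pos).const_div_atTop _
  have habs : ∀ n : ℤ, |(n : ℝ)| - ‖α‖ ≤ ‖α - (n : ℂ)‖ := by
    intro n
    rw [norm_sub_rev]
    have := norm_sub_norm_le (n : ℂ) α
    simpa using this
  refine aux_limit _ P hP (hlim _ ?_) (hlim _ ?_) _ ?_
  · refine tendsto_atTop_mono habs (tendsto_atTop_add_const_right _ _ ?_)
    exact tendsto_abs_atTop_atTop.comp tendsto_intCast_atTop_atTop
  · refine tendsto_atTop_mono habs (tendsto_atTop_add_const_right _ _ ?_)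
    exact tendsto_abs_atBot_atTop.comp ((tendsto_intCast_atBot_iff.2 tendsto_id))
  · simp_rw [aux_block]
    rw [Finset.mul_sum]
    refine tendsto_finsetSum _ fun r _ => ?_
    have hx : (α - r) / P ∈ Complex.integerComplement := by
      rintro ⟨m, hm⟩
      rw [eq_div_iff hP0] at hm
      apply hα (m * P + r)
      push_cast
      rw [hm]; ring
    have hr : α - r ≠ 0 := sub_ne_zero.2 (by exact_mod_cast hα r)
    have key := (((tendsto_logDeriv_euler_cot_sub hx).const_mul
      (g r / (Real.pi * P))).const_add (g r / (Real.pi * (α - r))))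
    convert key using 2 with K
    · rw [Finset.mul_sum]
      push_cast
      congr 1
      refine Finset.sum_congr rfl fun k _ => ?_
      have p1 : g (r + P * (k + 1)) = g r := by
        have := hper.int_mul (k + 1) r
        rw [← this]; congr 1; simp; ring
      have p2 : g (r - P * (k + 1)) = g r := by
        have := hper.int_mul (-(k + 1)) r
        rw [← this]; congr 1; simp; ring
      rw [p1, p2]
      have n1 : α - (r + P * (k + 1)) ≠ 0 :=
        sub_ne_zero.2 (by exact_mod_cast hα (r + P * (k + 1)))
      have n2 : α - (r - P * (k + 1)) ≠ 0 :=
        sub_ne_zero.2 (by exact_mod_cast hα (r - P * (k + 1)))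
      simp only [cotTerm]
      have q1 : (α - r) / P - (k + 1) = (α - (r + P * (k + 1))) / P := by field_simp; ring
      have q2 : (α - r) / P + (k + 1) = (α - (r - P * (k + 1))) / P := by field_simp; ring
      rw [q1, q2]
      field_simp
    · rw [← mul_div_assoc]
      field_simp
      ring

/-- Shannon interpolation of an `N`-periodic sequence: for `α ∈ ℂ ∖ ℤ`, the symmetric
partial sums `∑_{n=-M}^{M} sinc(α-n) c(n)` converge, with limit
`(1/N) ∑_{n=0}^{N-1} sin(π(α-n)) cot(π(α-n)/N) c(n)` if `N` is even, and
`(1/N) ∑_{n=0}^{N-1} sin(π(α-n)) csc(π(α-n)/N) c(n)` if `N` is odd. -/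
theorem shannon_series_periodic (N : ℕ) (hN : 1 ≤ N) (c : ℤ → ℂ)
    (hc : ∀ n : ℤ, c (n + N) = c n) (α : ℂ) (hα : ∀ m : ℤ, α ≠ (m : ℂ)) :
    Tendsto (fun M : ℕ => ∑ n ∈ Finset.Icc (-(M : ℤ)) (M : ℤ),
        csinc (α - (n : ℂ)) * c n)
      atTop (𝓝 (if Even N then
          (1 / (N : ℂ)) * ∑ n ∈ Finset.range N,
            Complex.sin ((Real.pi : ℂ) * (α - n)) *
              Complex.cot ((Real.pi : ℂ) * (α - n) / N) * c n
        else
          (1 / (N : ℂ)) * ∑ n ∈ Finset.range N,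
            Complex.sin ((Real.pi : ℂ) * (α - n)) *
              (Complex.sin ((Real.pi : ℂ) * (α - n) / N))⁻¹ * c n)) := by
  have hpi : (Real.pi : ℂ) ≠ 0 := by exact_mod_cast Real.pi_ne_zero
  have hN0 : (N : ℂ) ≠ 0 := by exact_mod_cast (show N ≠ 0 by omega)
  set g : ℤ → ℂ := fun n => Complex.sin ((Real.pi : ℂ) * (α - n)) * c n with hgdef
  have hg1 : ∀ n : ℤ, g (n + N) = (-1) ^ N * g n := by
    intro n
    simp only [hgdef, hc]
    push_cast
    rw [show (Real.pi : ℂ) * (α - (n + N)) = Real.pi * (α - n) - N * Real.pi by ring,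
      Complex.sin_antiperiodic.sub_nat_mul_eq]
    ring
  have hterm : ∀ n : ℤ, csinc (α - (n : ℂ)) * c n = g n / ((Real.pi : ℂ) * (α - n)) := by
    intro n
    rw [csinc, if_neg (sub_ne_zero.2 (hα n))]
    simp only [hgdef]
    ring
  simp_rw [hterm]
  split_ifs with hE
  · have := aux_periodic N hN g (fun n => by rw [hg1, hE.neg_one_pow, one_mul]) α hα
    convert this using 4 with n
    simp only [hgdef]
    push_cast
    ring
  · have hO : Odd N := Nat.not_even_iff_odd.1 hE
    have hg2 : ∀ n : ℤ, g (n + N) = - g n := fun n => by rw [hg1, hO.neg_one_pow]; ring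
    have := aux_periodic (2 * N) (by omega) g (fun n => by
      rw [show n + ((2 * N : ℕ) : ℤ) = n + N + N by push_cast; ring, hg2, hg2, neg_neg]) α hα
    convert this using 2
    rw [two_mul N, Finset.sum_range_add, ← Finset.sum_add_distrib, Finset.mul_sum, Finset.mul_sum]
    refine Finset.sum_congr rfl fun r _ => ?_
    have e0 : g ((N + r : ℕ) : ℤ) = - g r := by
      rw [← hg2]; congr 1; push_cast; ring
    rw [e0]
    have e1 : (Real.pi : ℂ) * (α - r) / N = 2 * (Real.pi * (α - r) / ((N + N : ℕ) : ℂ)) := by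
      push_cast; field_simp; ring
    have e2 : (Real.pi : ℂ) * (α - (N + r : ℕ)) / ((N + N : ℕ) : ℂ)
        = Real.pi * (α - r) / ((N + N : ℕ) : ℂ) - Real.pi / 2 := by
      push_cast; field_simp; ring
    have hs : Complex.sin ((Real.pi : ℂ) * (α - r) / N) ≠ 0 := by
      rw [Complex.sin_ne_zero_iff]
      intro k hk
      rw [div_eq_iff hN0] at hk
      apply hα (k * N + r)
      push_cast
      apply mul_left_cancel₀ hpi
      linear_combination hk
    have hgr : Complex.sin ((Real.pi : ℂ) * (α - r)) * c r = g r := by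
      simp [hgdef]
    clear_value g
    rw [mul_right_comm, hgr, e2]
    rw [e1] at hs ⊢
    generalize (Real.pi : ℂ) * (α - r) / ((N + N : ℕ) : ℂ) = y at *
    rw [Complex.sin_two_mul] at hs ⊢
    have hs1 : Complex.sin y ≠ 0 := fun h => hs (by rw [h]; ring)
    have hs2 : Complex.cos y ≠ 0 := fun h => hs (by rw [h]; ring)
    rw [Complex.cot, Complex.cot, Complex.sin_sub_pi_div_two, Complex.cos_sub_pi_div_two]
    push_cast
    field_simp
    linear_combination (-2 * g r) * Complex.sin_sq_add_cos_sq y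
end

section
/- For every α ∈ ℂ∖ℤ and every x ∈ ℂ, the symmetric partial sums ∑_{n=−M}^{M} sinc(α−n)·sin(x + πn/2) converge as M → ∞ and their limit equals sin(x + πα/2). (This expresses that the fractional derivative of sine, obtained by Shannon interpolation of its integer-order derivatives sin(x + πn/2), is sin(x + πα/2).) -/
open Filter Finset Topology

open Complex in
lemma aux_cot_hasSum {z : ℂ} (hz : ∀ m : ℤ, z ≠ (m : ℂ)) :
    HasSum (cotTerm z) ((Real.pi : ℂ) * Complex.cot (Real.pi * z) - 1 / z) := by
  have hz' : z ∈ Complex.integerComplement := by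
    rw [Complex.mem_integerComplement_iff]
    rintro ⟨m, hm⟩
    exact hz m hm.symm
  exact (Summable.hasSum_iff_tendsto_nat (summable_cotTerm hz')).mpr
    (tendsto_logDeriv_euler_cot_sub hz')

lemma aux_sin_ne {z : ℂ} (hz : ∀ m : ℤ, z ≠ (m : ℂ)) :
    Complex.sin ((Real.pi : ℂ) * z) ≠ 0 := by
  apply sin_pi_mul_ne_zero
  rw [Complex.mem_integerComplement_iff]
  rintro ⟨m, hm⟩
  exact hz m hm.symm

lemma aux_cosec {b : ℂ} (hb : ∀ m : ℤ, b ≠ (m : ℂ)) (hb2 : ∀ m : ℤ, b / 2 ≠ (m : ℂ)) :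
    HasSum (fun j : ℕ => (-1 : ℂ) ^ (j + 1) * cotTerm b j)
      ((Real.pi : ℂ) / Complex.sin (Real.pi * b) - 1 / b) := by
  have h1 := aux_cot_hasSum hb
  have h2 := aux_cot_hasSum hb2
  have h3 : HasSum (fun j : ℕ => ((-1 : ℂ) ^ (j + 1) + 1) * cotTerm b j)
      (0 + ((Real.pi : ℂ) * Complex.cot (Real.pi * (b / 2)) - 1 / (b / 2))) := by
    apply HasSum.even_add_odd
    · convert! hasSum_zero using 2 with k
      simp [pow_succ, pow_mul]
    · convert! h2 using 2 with k
      have e1 : b / 2 - ((k : ℂ) + 1) = (b - (2 * k + 1 + 1)) / 2 := by ring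
      have e2 : b / 2 + ((k : ℂ) + 1) = (b + (2 * k + 1 + 1)) / 2 := by ring
      simp only [cotTerm, e1, e2, pow_succ, pow_mul]
      push_cast
      rw [one_div_div, one_div_div]
      norm_num
      ring
  have h4 := h3.sub h1
  convert! h4 using 1
  · ext j; ring
  · have hb0 : b ≠ 0 := by simpa using hb 0
    have hs := aux_sin_ne hb
    have hs2 := aux_sin_ne hb2
    have e : (Real.pi : ℂ) * b = 2 * (Real.pi * (b / 2)) := by ring
    rw [Complex.cot_eq_cos_div_sin, Complex.cot_eq_cos_div_sin]
    rw [e, Complex.sin_two_mul] at hs ⊢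
    rw [Complex.cos_two_mul]
    generalize Complex.sin (Real.pi * (b / 2)) = s at *
    generalize Complex.cos (Real.pi * (b / 2)) = c at *
    have hc : c ≠ 0 := by rintro rfl; simp at hs
    field_simp
    ring

lemma aux_cos (n : ℤ) : Complex.cos ((n : ℂ) * Real.pi) = (-1) ^ n := by
  have h := congrArg (fun t : ℝ => (t : ℂ)) (Real.cos_int_mul_pi n)
  simpa using h

lemma aux_sin (n : ℤ) : Complex.sin ((n : ℂ) * Real.pi) = 0 := by
  exact_mod_cast congrArg (fun t : ℝ => (t : ℂ)) (Real.sin_int_mul_pi n)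

lemma aux_csinc {a : ℂ} (ha : ∀ m : ℤ, a ≠ (m : ℂ)) (n : ℤ) :
    csinc (a - n) = (-1) ^ n * Complex.sin (Real.pi * a) / Real.pi * (1 / (a - n)) := by
  have h : a - n ≠ 0 := sub_ne_zero.mpr (ha n)
  have hp : (Real.pi : ℂ) ≠ 0 := by exact_mod_cast Real.pi_ne_zero
  have e : Complex.sin (Real.pi * (a - n)) = (-1) ^ n * Complex.sin (Real.pi * a) := by
    rw [mul_sub, mul_comm (Real.pi : ℂ) (n : ℂ), Complex.sin_sub, aux_cos, aux_sin]
    ring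
  rw [csinc, if_neg h, e]
  field_simp

lemma aux_Icc (f : ℤ → ℂ) (M : ℕ) : ∑ n ∈ Finset.Icc (-(M : ℤ)) (M : ℤ), f n =
    f 0 + ∑ i ∈ Finset.range M, (f (i + 1) + f (-(i + 1))) := by
  induction M with
  | zero => simp
  | succ M ih =>
    rw [Nat.cast_add, Nat.cast_one, Finset.Icc_succ_succ, Finset.sum_union (by simp),
      Finset.sum_pair (by lia), ih, Finset.sum_range_succ]
    ring

lemma aux_shift (f : ℤ → ℂ) (M : ℕ) : ∑ n ∈ Finset.Icc (-(M : ℤ)) (M : ℤ), f n =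
    ∑ n ∈ Finset.Icc (-(M : ℤ)) (M : ℤ), f (n + 1) + (f (-M) - f (M + 1)) := by
  induction M with
  | zero => simp
  | succ M ih =>
    rw [Nat.cast_add, Nat.cast_one, Finset.Icc_succ_succ, Finset.sum_union (by simp),
      Finset.sum_union (by simp),
      Finset.sum_pair (by lia), Finset.sum_pair (by lia), ih]
    have : (-((M : ℤ) + 1) + 1) = -M := by ring
    rw [this]
    ring

lemma aux_even {a : ℂ} (ha : ∀ m : ℤ, a ≠ (m : ℂ)) :
    Tendsto (fun M : ℕ => ∑ n ∈ Finset.Icc (-(M : ℤ)) (M : ℤ),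
        csinc (a - (n : ℂ)) * Complex.cos ((Real.pi : ℂ) * (n : ℂ) / 2))
      atTop (𝓝 (Complex.cos ((Real.pi : ℂ) * a / 2))) := by
  have ha2 : ∀ m : ℤ, a / 2 ≠ (m : ℂ) := fun m h => ha (2 * m) (by push_cast; rw [← h]; ring)
  have ha4 : ∀ m : ℤ, a / 2 / 2 ≠ (m : ℂ) := fun m h =>
    ha (4 * m) (by push_cast; rw [← h]; ring)
  have hp : (Real.pi : ℂ) ≠ 0 := by exact_mod_cast Real.pi_ne_zero
  have hcos : ∀ k : ℤ, Complex.cos (Real.pi * ((2 * k : ℤ) : ℂ) / 2) = (-1) ^ k := by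
    intro k
    rw [← aux_cos]; push_cast; congr 1; ring
  have hcos' : ∀ k : ℤ, Complex.cos (Real.pi * ((2 * k + 1 : ℤ) : ℂ) / 2) = 0 := by
    intro k
    rw [Complex.cos_eq_zero_iff]
    exact ⟨k, by push_cast; ring⟩
  have key : HasSum (fun i : ℕ =>
      (csinc (a - ((i + 1 : ℤ) : ℂ)) * Complex.cos ((Real.pi : ℂ) * ((i + 1 : ℤ) : ℂ) / 2) +
       csinc (a - ((-(i + 1) : ℤ) : ℂ)) *
        Complex.cos ((Real.pi : ℂ) * ((-(i + 1) : ℤ) : ℂ) / 2)))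
      (0 + Complex.sin (Real.pi * a) / Real.pi / 2 *
        ((Real.pi : ℂ) / Complex.sin (Real.pi * (a / 2)) - 1 / (a / 2))) := by
    apply HasSum.even_add_odd
    · convert! hasSum_zero using 2 with k
      have e1 := hcos' k
      have e2 := hcos' (-k - 1)
      rw [show (2 * (-(k : ℤ) - 1) + 1) = -(((2 * k : ℕ) : ℤ) + 1) by push_cast; ring] at e2
      rw [show (2 * (k : ℤ) + 1) = (((2 * k : ℕ) : ℤ) + 1) by push_cast; ring] at e1
      rw [e1, e2]; simp
    · convert! (aux_cosec ha2 ha4).mul_left (Complex.sin (Real.pi * a) / Real.pi / 2)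
        using 2 with k
      rw [show -(((2 * k + 1 : ℕ) : ℤ) + 1) = 2 * (-(k + 1)) by push_cast; ring,
        show (((2 * k + 1 : ℕ) : ℤ) + 1) = 2 * (k + 1) by push_cast; ring,
        hcos, hcos, aux_csinc ha, aux_csinc ha, zpow_mul, zpow_mul]
      have e3 : (-1 : ℂ) ^ ((k : ℤ) + 1) = (-1) ^ (k + 1) := by exact_mod_cast zpow_natCast (-1 : ℂ) (k + 1)
      have e4 : (-1 : ℂ) ^ (-((k : ℤ) + 1)) = (-1) ^ (k + 1) := by
        rw [zpow_neg, e3, ← inv_pow]; norm_num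
      have e1 : a / 2 - ((k : ℂ) + 1) = (a - (2 * (k + 1))) / 2 := by ring
      have e2 : a / 2 + ((k : ℂ) + 1) = (a + (2 * (k + 1))) / 2 := by ring
      rw [e3, e4]
      simp only [cotTerm, e1, e2]
      rw [one_div_div, one_div_div]
      have e5 : ((-1 : ℂ) ^ (2 : ℤ)) = 1 := by norm_num
      rw [e5, one_zpow, one_zpow]
      push_cast
      rw [show a - 2 * -((k : ℂ) + 1) = a + 2 * (k + 1) by ring]
      ring
  have h := key.tendsto_sum_nat.const_add (csinc (a - ((0 : ℤ) : ℂ)) *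
    Complex.cos ((Real.pi : ℂ) * ((0 : ℤ) : ℂ) / 2))
  simp_rw [aux_Icc]
  convert! h using 2
  have ha0 : a ≠ 0 := by simpa using ha 0
  have hs := aux_sin_ne ha2
  rw [aux_csinc ha, show (Real.pi : ℂ) * a / 2 = Real.pi * (a / 2) by ring,
    show (Real.pi : ℂ) * a = 2 * (Real.pi * (a / 2)) by ring, Complex.sin_two_mul]
  generalize Complex.sin (Real.pi * (a / 2)) = s at *
  simp
  field_simp
  ring

lemma aux_zero {a : ℂ} (ha : ∀ m : ℤ, a ≠ (m : ℂ)) (x : ℂ) (u : ℕ → ℤ)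
    (hu : Tendsto (fun n => |u n|) atTop atTop) :
    Tendsto (fun M : ℕ => csinc (a - (u M : ℂ)) *
      Complex.sin (x + (Real.pi : ℂ) * (u M : ℂ) / 2)) atTop (𝓝 0) := by
  have hb : ∀ n : ℤ, ‖Complex.sin (x + (Real.pi : ℂ) * (n : ℂ) / 2)‖ ≤
      ‖Complex.sin x‖ + ‖Complex.cos x‖ := by
    intro n
    rw [Complex.sin_add]
    have e : (Real.pi : ℂ) * (n : ℂ) / 2 = ((Real.pi * n / 2 : ℝ) : ℂ) := by push_cast; rfl
    rw [e, ← Complex.ofReal_cos, ← Complex.ofReal_sin]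
    refine (norm_add_le _ _).trans ?_
    rw [norm_mul, norm_mul, Complex.norm_real, Complex.norm_real]
    exact add_le_add (mul_le_of_le_one_right (norm_nonneg _) (Real.abs_cos_le_one _))
      (mul_le_of_le_one_right (norm_nonneg _) (Real.abs_sin_le_one _))
  have h1 : Tendsto (fun M : ℕ => ‖a - (u M : ℂ)‖) atTop atTop := by
    have h2 : Tendsto (fun M : ℕ => ((|u M| : ℤ) : ℝ) - ‖a‖) atTop atTop :=
      tendsto_atTop_add_const_right _ _ (tendsto_intCast_atTop_atTop.comp hu)
    refine tendsto_atTop_mono (fun M => ?_) h2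
    have := norm_sub_norm_le (u M : ℂ) a
    rw [norm_sub_rev, Complex.norm_intCast] at this
    exact_mod_cast this
  have h3 := (h1.inv_tendsto_atTop).const_mul
    (‖Complex.sin (Real.pi * a) / Real.pi‖ * (‖Complex.sin x‖ + ‖Complex.cos x‖))
  rw [mul_zero] at h3
  refine squeeze_zero_norm (fun M => ?_) h3
  rw [aux_csinc ha, norm_mul, mul_div_assoc, norm_mul, norm_mul, norm_zpow, norm_neg, norm_one,
    one_zpow, one_mul, one_div, norm_inv, mul_right_comm]
  simp only [Pi.inv_apply]
  gcongr
  exact hb _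

/-- Shannon interpolation of the integer-order derivatives of sine: for `α ∈ ℂ ∖ ℤ` and
`x ∈ ℂ`, the symmetric partial sums `∑_{n=-M}^{M} sinc(α-n) sin(x + πn/2)` converge to
`sin(x + πα/2)`. -/
theorem shannon_frac_deriv_sin (α : ℂ) (hα : ∀ m : ℤ, α ≠ (m : ℂ)) (x : ℂ) :
    Tendsto (fun M : ℕ => ∑ n ∈ Finset.Icc (-(M : ℤ)) (M : ℤ),
        csinc (α - (n : ℂ)) * Complex.sin (x + (Real.pi : ℂ) * (n : ℂ) / 2))
      atTop (𝓝 (Complex.sin (x + (Real.pi : ℂ) * α / 2))) := by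
  have hodd : Tendsto (fun M : ℕ => ∑ n ∈ Finset.Icc (-(M : ℤ)) (M : ℤ),
        csinc (α - (n : ℂ)) * Complex.sin ((Real.pi : ℂ) * (n : ℂ) / 2))
      atTop (𝓝 (Complex.sin ((Real.pi : ℂ) * α / 2))) := by
    have hα1 : ∀ m : ℤ, α - 1 ≠ (m : ℂ) := fun m h =>
      hα (m + 1) (by push_cast; rw [← h]; ring)
    have h1 := aux_even hα1
    have z1 := aux_zero hα 0 (fun M => -(M : ℤ)) (by simpa using tendsto_natCast_atTop_atTop)
    have z2 := aux_zero hα 0 (fun M => (M : ℤ) + 1) (by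
      refine tendsto_atTop_mono (fun M => le_abs_self _) ?_
      exact tendsto_atTop_add_const_right _ _ tendsto_natCast_atTop_atTop)
    have h := h1.add (z1.sub z2)
    simp only [zero_add] at h
    rw [sub_zero, add_zero] at h
    convert! h using 2 with M
    · rw [aux_shift (fun n : ℤ => csinc (α - (n : ℂ)) *
        Complex.sin ((Real.pi : ℂ) * (n : ℂ) / 2))]
      congr 1
      refine Finset.sum_congr rfl fun n _ => ?_
      rw [← Complex.sin_add_pi_div_two]
      push_cast
      congr 2 <;> ring
    · rw [← Complex.sin_add_pi_div_two]
      congr 1; ring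
  have h := ((aux_even hα).const_mul (Complex.sin x)).add (hodd.const_mul (Complex.cos x))
  convert! h using 2 with M
  · rw [Finset.mul_sum, Finset.mul_sum, ← Finset.sum_add_distrib]
    refine Finset.sum_congr rfl fun n _ => ?_
    rw [Complex.sin_add]; ring
  · rw [Complex.sin_add]
end

section
/- Let ζ be the Riemann zeta function and let η(k) denote the Dirichlet eta values: η(k) = (1 − 2^{1−k})·ζ(k) for k ∈ ℕ, k ≠ 1, and η(1) = log 2 (so η(0) = 1/2). Then for every s ∈ ℂ with Re s > 0, s ≠ 1, and 2^{1−s} ≠ 1, the series ∑_{n=0}^∞ (∑_{k=0}^n P_k(n)·η(k))·P_n(s) converges and ζ(s) = (1 − 2^{1−s})^{−1} · ∑_{n=0}^∞ (∑_{k=0}^n P_k(n)·η(k))·P_n(s); that is, ζ(s) = ∑_n [∑_k P_k(n)·((1−2^{1−k})/(1−2^{1−s}))·ζ(k)]·P_n(s) with the k = 1 term interpreted via η(1) = log 2. -/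
open Filter Finset Topology

/-- The `n`-th Pochhammer–Newton polynomial `P_n(α) = ((-1)^n / n!) ∏_{m=0}^{n-1} (α - m)`. -/
noncomputable def pochNewton (n : ℕ) (α : ℂ) : ℂ :=
  ((-1 : ℂ) ^ n / (n.factorial : ℂ)) * ∏ m ∈ Finset.range n, (α - (m : ℂ))

/-- Dirichlet eta values at the natural numbers: `η(k) = (1 - 2^{1-k}) ζ(k)` for `k ≠ 1`,
and `η(1) = log 2` (so `η(0) = 1/2`). -/
noncomputable def etaValue (k : ℕ) : ℂ :=
  if k = 1 then (Real.log 2 : ℂ) else (1 - (2 : ℂ) ^ (1 - (k : ℂ))) * riemannZeta k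

noncomputable def etaTerm (j : ℕ) (s : ℂ) : ℂ :=
  ((2 * j + 1 : ℕ) : ℂ) ^ (-s) - ((2 * j + 2 : ℕ) : ℂ) ^ (-s)

lemma etaTerm_bound (j : ℕ) (s : ℂ) (δ R : ℝ) (hδ : 0 < δ) (h1 : δ ≤ s.re) (h2 : ‖s‖ ≤ R) :
    ‖etaTerm j s‖ ≤ R * ((j + 1 : ℕ) : ℝ) ^ (-(δ + 1)) := by
  have hj : (0 : ℝ) ≤ j := Nat.cast_nonneg j
  have key := norm_image_sub_le_of_norm_deriv_le_segment' (a := (2 * j + 1 : ℝ))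
    (b := 2 * j + 2) (f := fun x : ℝ => (x : ℂ) ^ (-s))
    (f' := fun x : ℝ => (-s) * (x : ℂ) ^ (-s - 1))
    (C := R * ((j + 1 : ℕ) : ℝ) ^ (-(δ + 1))) ?_ ?_ (2 * j + 2) ⟨by linarith, le_refl _⟩
  · rw [etaTerm, norm_sub_rev]
    have e : (2 * (j:ℝ) + 2 - (2 * j + 1)) = 1 := by ring
    rw [e, mul_one] at key
    have e1 : ((2 * j + 1 : ℕ) : ℂ) = ((2 * j + 1 : ℝ) : ℂ) := by push_cast; rfl
    have e2 : ((2 * j + 2 : ℕ) : ℂ) = ((2 * j + 2 : ℝ) : ℂ) := by push_cast; rfl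
    rw [e1, e2]
    exact key
  · intro x hx
    have hx0 : 0 < x := by linarith [hx.1]
    have : HasDerivAt (fun z : ℂ => z ^ (-s)) ((-s) * (x : ℂ) ^ (-s - 1)) (x : ℂ) := by
      have := (hasDerivAt_id (x : ℂ)).cpow_const (c := -s) (Or.inl (by simpa using hx0))
      simpa using this
    exact this.comp_ofReal.hasDerivWithinAt
  · intro x hx
    have hx0 : 0 < x := by linarith [hx.1]
    rw [norm_mul, norm_neg, Complex.norm_cpow_eq_rpow_re_of_pos hx0]
    gcongr
    · exact (norm_nonneg s).trans h2
    · simp only [Complex.sub_re, Complex.neg_re, Complex.one_re]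
      calc x ^ (-s.re - 1) ≤ x ^ (-(δ + 1)) := by
            apply Real.rpow_le_rpow_of_exponent_le <;> linarith [hx.1]
        _ ≤ _ := by
            apply Real.rpow_le_rpow_of_nonpos
            · positivity
            · push_cast; linarith [hx.1]
            · linarith

lemma summable_bound (δ R : ℝ) (hδ : 0 < δ) :
    Summable (fun j : ℕ => R * ((j + 1 : ℕ) : ℝ) ^ (-(δ + 1))) := by
  apply Summable.mul_left
  exact (summable_nat_add_iff 1).2 (Real.summable_nat_rpow.2 (by linarith : -(δ + 1) < -1))

lemma etaTerm_summable (s : ℂ) (hs : 0 < s.re) : Summable (fun j => etaTerm j s) :=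
  Summable.of_norm_bounded (summable_bound s.re ‖s‖ hs)
    fun j => etaTerm_bound j s s.re ‖s‖ hs le_rfl le_rfl

lemma etaSum_of_one_lt (s : ℂ) (hs : 1 < s.re) :
    ∑' j, etaTerm j s = (1 - (2 : ℂ) ^ (1 - s)) * riemannZeta s := by
  have hsum : Summable (fun n : ℕ => ((n + 1 : ℕ) : ℂ) ^ (-s)) := by
    have := (summable_nat_add_iff 1).2 (Complex.summable_one_div_nat_cpow.2 hs)
    simpa [Complex.cpow_neg] using this
  have hz : riemannZeta s = ∑' n : ℕ, ((n + 1 : ℕ) : ℂ) ^ (-s) := by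
    rw [zeta_eq_tsum_one_div_nat_add_one_cpow hs]
    simp [Complex.cpow_neg]
  have he : Summable (fun n : ℕ => ((2 * n + 1 : ℕ) : ℂ) ^ (-s)) :=
    hsum.comp_injective (i := fun n => 2 * n) (fun a b h => by simpa using h)
  have ho : Summable (fun n : ℕ => ((2 * n + 1 + 1 : ℕ) : ℂ) ^ (-s)) :=
    hsum.comp_injective (i := fun n => 2 * n + 1) (fun a b h => by simpa using h)
  have h1 := tsum_even_add_odd (f := fun n : ℕ => ((n + 1 : ℕ) : ℂ) ^ (-s)) he ho
  have h2 : ∑' n : ℕ, ((2 * n + 1 + 1 : ℕ) : ℂ) ^ (-s) = 2 ^ (-s) * riemannZeta s := by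
    rw [hz, ← tsum_mul_left]
    congr 1; ext n
    rw [show 2 * n + 1 + 1 = 2 * (n + 1) by ring, Nat.cast_mul, Complex.natCast_mul_natCast_cpow]
    simp
  have h3 : ∑' j, etaTerm j s = ∑' n : ℕ, ((2 * n + 1 : ℕ) : ℂ) ^ (-s) -
      ∑' n : ℕ, ((2 * n + 1 + 1 : ℕ) : ℂ) ^ (-s) := by
    rw [← he.tsum_sub ho]
    exact tsum_congr fun j => rfl
  have h4 : (2 : ℂ) ^ (1 - s) = 2 * 2 ^ (-s) := by
    rw [sub_eq_add_neg, Complex.cpow_add _ _ two_ne_zero, Complex.cpow_one]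
  rw [h2, ← hz] at h1
  rw [h3, h2, h4, eq_sub_of_add_eq h1]
  ring

lemma etaSum_diff : DifferentiableOn ℂ (fun s => ∑' j, etaTerm j s) {s | 0 < s.re} := by
  intro s hs
  have hs' : 0 < s.re := hs
  set U : Set ℂ := {z | s.re / 2 < z.re} ∩ Metric.ball 0 (‖s‖ + 1) with hU
  have hUo : IsOpen U := (isOpen_lt continuous_const Complex.continuous_re).inter Metric.isOpen_ball
  have hsU : s ∈ U := ⟨by simp; linarith, by simp⟩
  have : DifferentiableOn ℂ (fun s => ∑' j, etaTerm j s) U := by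
    apply Complex.differentiableOn_tsum_of_summable_norm
      (summable_bound (s.re / 2) (‖s‖ + 1) (by linarith)) _ hUo
    · intro j w hw
      apply etaTerm_bound _ _ _ _ (by linarith) hw.1.le
      have := hw.2
      rw [mem_ball_zero_iff] at this
      exact this.le
    · intro j w hw
      apply DifferentiableAt.differentiableWithinAt
      unfold etaTerm
      apply DifferentiableAt.sub
      · exact DifferentiableAt.const_cpow (by fun_prop) (Or.inl (Nat.cast_ne_zero.2 (by omega)))
      · exact DifferentiableAt.const_cpow (by fun_prop) (Or.inl (Nat.cast_ne_zero.2 (by omega)))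
  exact (this.differentiableAt (hUo.mem_nhds hsU)).differentiableWithinAt

noncomputable def etaFn : ℂ → ℂ :=
  Function.update (fun s => (1 - (2 : ℂ) ^ (1 - s)) * riemannZeta s) 1 (Real.log 2 : ℂ)

lemma diff_two (s : ℂ) : DifferentiableAt ℂ (fun s : ℂ => 1 - (2 : ℂ) ^ (1 - s)) s :=
  (DifferentiableAt.const_cpow (by fun_prop) (Or.inl two_ne_zero)).const_sub _

lemma etaFn_diff : DifferentiableOn ℂ etaFn {s | 0 < s.re} := by
  have hm : {s : ℂ | 0 < s.re} ∈ 𝓝 (1 : ℂ) :=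
    (isOpen_lt continuous_const Complex.continuous_re).mem_nhds (by simp)
  rw [← Complex.differentiableOn_compl_singleton_and_continuousAt_iff hm]
  constructor
  · apply DifferentiableOn.congr (f := fun s => (1 - (2 : ℂ) ^ (1 - s)) * riemannZeta s)
    · intro s hs
      exact ((diff_two s).mul (differentiableAt_riemannZeta hs.2)).differentiableWithinAt
    · intro s hs
      exact Function.update_of_ne hs.2 _ _
  · rw [etaFn, continuousAt_update_same]
    have hd : HasDerivAt (fun s : ℂ => 1 - (2 : ℂ) ^ (1 - s)) (Real.log 2 : ℂ) 1 := by
      have h := (((hasDerivAt_id (1 : ℂ)).const_sub 1).const_cpow (c := 2)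
        (Or.inl two_ne_zero)).const_sub 1
      have e : (Real.log 2 : ℂ) =
          -((2 : ℂ) ^ (1 - id (1 : ℂ)) * Complex.log 2 * -1) := by
        simp [Complex.ofReal_log]
      rw [e]
      exact h
    have h1 := hasDerivAt_iff_tendsto_slope.1 hd
    have h2 := h1.mul riemannZeta_residue_one
    rw [mul_one] at h2
    refine h2.congr' ?_
    filter_upwards [self_mem_nhdsWithin] with x hx
    have : x - 1 ≠ 0 := sub_ne_zero.2 hx
    simp only [slope_def_field, sub_self, Complex.cpow_zero]
    field_simp
    ring

lemma etaSum_eq (s : ℂ) (hs : 0 < s.re) : ∑' j, etaTerm j s = etaFn s := by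
  have hUo : IsOpen {s : ℂ | 0 < s.re} := isOpen_lt continuous_const Complex.continuous_re
  have hc : IsPreconnected {s : ℂ | 0 < s.re} := (convex_halfSpace_re_gt 0).isPreconnected
  refine (etaSum_diff.analyticOnNhd hUo).eqOn_of_preconnected_of_eventuallyEq
    (etaFn_diff.analyticOnNhd hUo) hc (z₀ := 2) (by simp) ?_ hs
  have : {s : ℂ | 1 < s.re} ∈ 𝓝 (2 : ℂ) :=
    (isOpen_lt continuous_const Complex.continuous_re).mem_nhds (by simp)
  filter_upwards [this] with z hz
  rw [etaSum_of_one_lt z hz, etaFn, Function.update_of_ne]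
  rintro rfl
  simp at hz

lemma etaValue_eq (k : ℕ) (hk : k ≠ 0) : etaValue k = ∑' j, etaTerm j k := by
  rw [etaSum_eq k (by simpa using Nat.pos_of_ne_zero hk), etaValue, etaFn]
  split_ifs with h
  · subst h; simp
  · rw [Function.update_of_ne (by exact_mod_cast h)]

lemma etaValue_zero : etaValue 0 = 1 / 2 := by
  simp [etaValue, riemannZeta_zero]; norm_num

lemma poch_choose (n : ℕ) (s : ℂ) : pochNewton n s = (-1) ^ n * Ring.choose s n := by
  rw [Ring.choose_eq_smul, ← Polynomial.aeval_eq_smeval, Polynomial.aeval_def, Polynomial.eval₂_eq_eval_map,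
    descPochhammer_map, descPochhammer_eval_eq_prod_range, pochNewton]
  simp only [smul_eq_mul]
  ring

lemma poch_hasSum (s x : ℂ) (hx : ‖x‖ < 1) :
    HasSum (fun n => pochNewton n s * x ^ n) ((1 - x) ^ s) := by
  have h := (Complex.one_add_cpow_hasFPowerSeriesOnBall_zero (a := s)).hasSum (y := -x)
    (by
      rw [mem_eball_zero_iff, enorm_neg, ← ENNReal.coe_one, enorm_lt_coe]
      exact_mod_cast hx)
  simp only [binomialSeries_apply, zero_add] at h
  have e : (fun n => pochNewton n s * x ^ n) =
      fun n => Ring.choose s n • (List.ofFn fun _ : Fin n => -x).prod := by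
    funext n
    rw [poch_choose]
    simp only [List.ofFn_const, List.prod_replicate, smul_eq_mul, neg_pow x]
    ring
  rw [e, sub_eq_add_neg]
  exact h

lemma poch_summable (s : ℂ) (hs : 0 < s.re) : Summable (fun n => ‖pochNewton n s‖) := by
  by_cases hn : ∃ k : ℕ, s = k
  · obtain ⟨k, rfl⟩ := hn
    apply summable_of_ne_finset_zero (s := Finset.range (k + 1))
    intro n hn
    have : k < n := by
      rw [Finset.mem_range, not_lt] at hn
      omega
    rw [pochNewton, Finset.prod_eq_zero (Finset.mem_range.2 this) (sub_self _)]
    simp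
  · push Not at hn
    have hG : Complex.Gamma (-s) ≠ 0 :=
      Complex.Gamma_ne_zero fun m h => hn m (neg_injective h)
    have hprod : ∀ n, ∏ j ∈ Finset.range n, (-s + (j : ℂ)) ≠ 0 := by
      intro n
      refine Finset.prod_ne_zero_iff.2 fun j _ h => hn j ?_
      linear_combination -h
    have hP : ∀ n : ℕ, pochNewton (n + 1) s * ((n + 1).factorial : ℂ) =
        ∏ j ∈ Finset.range (n + 1), (-s + (j : ℂ)) := by
      intro n
      have h0 : ((n + 1).factorial : ℂ) ≠ 0 := by exact_mod_cast Nat.factorial_ne_zero _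
      rw [pochNewton]
      have : ∏ j ∈ Finset.range (n + 1), (-s + (j : ℂ)) =
          ∏ j ∈ Finset.range (n + 1), ((-1) * (s - (j : ℂ))) :=
        Finset.prod_congr rfl fun j _ => by ring
      rw [this, Finset.prod_mul_distrib, Finset.prod_const, Finset.card_range]
      field_simp
    have hT := (Complex.GammaSeq_tendsto_Gamma (-s)).inv₀ hG
    have hO := hT.norm.isBoundedUnder_le
    obtain ⟨C, hC⟩ := hO
    rw [eventually_map] at hC
    rw [← summable_nat_add_iff 1]
    have hsum : Summable (fun n : ℕ => C * (n : ℝ) ^ (-s.re - 1)) :=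
      (Real.summable_nat_rpow.2 (by linarith)).mul_left C
    apply Summable.of_norm_bounded_eventually_nat hsum
    filter_upwards [hC, eventually_gt_atTop 0] with n hn1 hn0
    have hn0' : (0 : ℝ) < n := by exact_mod_cast hn0
    have hnc : (n : ℂ) ^ (-s) ≠ 0 := by
      rw [Ne, Complex.cpow_eq_zero_iff]
      rintro ⟨h, -⟩
      exact hn0.ne' (by exact_mod_cast h)
    have e : pochNewton (n + 1) s =
        (Complex.GammaSeq (-s) n)⁻¹ * ((n : ℂ) ^ (-s) / (n + 1)) := by
      have h1 := hP n
      have h2 := hprod (n + 1)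
      have h0 : ((n).factorial : ℂ) ≠ 0 := by exact_mod_cast Nat.factorial_ne_zero _
      have h3 : (n : ℂ) + 1 ≠ 0 := by exact_mod_cast Nat.succ_ne_zero n
      rw [Complex.GammaSeq, ← h1]
      rw [Nat.factorial_succ]
      push_cast
      field_simp
    rw [norm_norm, e, norm_mul, norm_div]
    have hC0 : 0 ≤ C := (norm_nonneg _).trans hn1
    apply mul_le_mul hn1 _ (by positivity) hC0
    rw [Complex.norm_natCast_cpow_of_pos hn0, Real.rpow_sub hn0', Real.rpow_one]
    have : ‖(n : ℂ) + 1‖ = n + 1 := by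
      have := Complex.norm_natCast (n + 1)
      simpa using this
    rw [this, Complex.neg_re]
    gcongr
    linarith

lemma poch_sum_zero (s : ℂ) (hs : 0 < s.re) : HasSum (fun n => pochNewton n s) 0 := by
  have hsm := (poch_summable s hs).of_norm
  have hA := Complex.tendsto_tsum_powerSeries_nhdsWithin_lt hsm.hasSum.tendsto_sum_nat
  have hB : Tendsto (fun x : ℝ => (1 - (x : ℂ)) ^ s) (𝓝[<] (1:ℝ)) (𝓝 0) := by
    have : ContinuousAt (fun x : ℝ => ((1 - x : ℝ) : ℂ) ^ s) 1 :=
      (Complex.continuousAt_ofReal_cpow_const _ _ (Or.inl hs)).comp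
        (f := fun x : ℝ => 1 - x) (by fun_prop)
    have h := this.tendsto.mono_left (nhdsWithin_le_nhds (s := Set.Iio 1))
    have hs0 : s ≠ 0 := by rintro rfl; simp at hs
    simpa [Complex.zero_cpow hs0] using h
  rw [tendsto_map'_iff] at hA
  have hE : (fun x : ℝ => (1 - (x : ℂ)) ^ s) =ᶠ[𝓝[<] (1:ℝ)]
      ((fun z : ℂ => ∑' n, pochNewton n s * z ^ n) ∘ Complex.ofReal) := by
    filter_upwards [Ioo_mem_nhdsLT (zero_lt_one (α := ℝ))] with x hx
    refine ((poch_hasSum s x ?_).tsum_eq).symm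
    rw [Complex.norm_real, Real.norm_eq_abs, abs_of_pos hx.1]; exact hx.2
  have := tendsto_nhds_unique (hB.congr' hE) hA
  have h2 := hsm.hasSum
  rwa [← this] at h2

lemma poch_finset (n : ℕ) (a : ℂ) :
    ∑ k ∈ Finset.range (n + 1), pochNewton k (n : ℂ) * a ^ k = (1 - a) ^ n := by
  rw [sub_eq_neg_add, add_pow]
  refine Finset.sum_congr rfl fun k _ => ?_
  rw [poch_choose, Ring.choose_natCast, neg_pow a]
  simp
  ring

noncomputable def stepR (n j : ℕ) : ℝ :=
  (1 - ((2 * j + 2 : ℕ) : ℝ)⁻¹) ^ n - (1 - ((2 * j + 1 : ℕ) : ℝ)⁻¹) ^ n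

lemma pow_mono (n a b : ℕ) (ha : 0 < a) (hab : a ≤ b) :
    (1 - (a : ℝ)⁻¹) ^ n ≤ (1 - (b : ℝ)⁻¹) ^ n := by
  have h1 : (1 : ℝ) ≤ a := by exact_mod_cast ha
  have h2 : (a : ℝ) ≤ b := by exact_mod_cast hab
  have h3 : (a : ℝ)⁻¹ ≤ 1 := inv_le_one_of_one_le₀ h1
  have h4 : (b : ℝ)⁻¹ ≤ (a : ℝ)⁻¹ := inv_anti₀ (by linarith) h2
  apply pow_le_pow_left₀ <;> linarith

lemma stepR_nonneg (n j : ℕ) : 0 ≤ stepR n j :=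
  sub_nonneg.2 (pow_mono n _ _ (by omega) (by omega))

lemma stepR_sum_le (n J : ℕ) :
    ∑ j ∈ Finset.range J, stepR n j ≤ (1 - ((2 * J + 1 : ℕ) : ℝ)⁻¹) ^ n := by
  induction J with
  | zero => simp
  | succ J ih =>
    rw [Finset.sum_range_succ]
    have := pow_mono n (2 * J + 2) (2 * (J + 1) + 1) (by omega) (by omega)
    unfold stepR at *
    linarith

lemma stepR_sum_le_one (n J : ℕ) : ∑ j ∈ Finset.range J, stepR n j ≤ 1 := by
  refine (stepR_sum_le n J).trans ?_
  have h1 : (1 : ℝ) ≤ ((2 * J + 1 : ℕ) : ℝ) := by exact_mod_cast Nat.succ_pos _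
  have h3 := inv_le_one_of_one_le₀ h1
  have h4 : 0 ≤ (((2 * J + 1 : ℕ) : ℝ))⁻¹ := by positivity
  apply pow_le_one₀ <;> linarith

lemma stepR_summable (n : ℕ) : Summable (stepR n) :=
  summable_of_sum_range_le (stepR_nonneg n) (stepR_sum_le_one n)

lemma stepR_tsum_le (n : ℕ) : ∑' j, stepR n j ≤ 1 :=
  Real.tsum_le_of_sum_range_le (stepR_nonneg n) (stepR_sum_le_one n)

lemma coeff_hasSum (n : ℕ) :
    HasSum (fun j => -(stepR n j : ℂ))
      (∑ k ∈ Finset.range (n + 1), pochNewton k (n : ℂ) * etaValue k - 1 / 2) := by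
  have h : ∀ k : ℕ, HasSum (fun j => etaTerm j k) (if k = 0 then 0 else etaValue k) := by
    intro k
    split_ifs with hk
    · subst hk
      simp [etaTerm, hasSum_zero]
    · rw [etaValue_eq k hk]
      exact (etaTerm_summable k (by simpa using Nat.pos_of_ne_zero hk)).hasSum
  have h2 := hasSum_sum (s := Finset.range (n + 1))
    (fun k _ => (h k).mul_left (pochNewton k (n : ℂ)))
  have e1 : (fun j => -(stepR n j : ℂ)) =
      fun j => ∑ k ∈ Finset.range (n + 1), pochNewton k (n : ℂ) * etaTerm j k := by
    funext j
    have e : ∀ k : ℕ, etaTerm j k = (((2 * j + 1 : ℕ) : ℂ)⁻¹) ^ k - (((2 * j + 2 : ℕ) : ℂ)⁻¹) ^ k := by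
      intro k
      simp [etaTerm, Complex.cpow_neg]
    simp only [e, mul_sub, Finset.sum_sub_distrib, poch_finset, stepR]
    push_cast
    ring
  have e2 : ∑ k ∈ Finset.range (n + 1), pochNewton k (n : ℂ) * etaValue k - 1 / 2 =
      ∑ k ∈ Finset.range (n + 1), pochNewton k (n : ℂ) * (if k = 0 then 0 else etaValue k) := by
    rw [Finset.sum_range_succ', Finset.sum_range_succ' _ n]
    simp [etaValue_zero, pochNewton]
  rw [e1, e2]
  exact h2

lemma etaTerm_hasSum (s : ℂ) (j : ℕ) :
    HasSum (fun n => pochNewton n s * -(stepR n j : ℂ)) (etaTerm j s) := by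
  have key : ∀ m : ℕ, 0 < m → HasSum (fun n => pochNewton n s * (1 - (m : ℂ)⁻¹) ^ n)
      ((m : ℂ) ^ (-s)) := by
    intro m hm
    have h1 : (1 : ℝ) ≤ m := by exact_mod_cast hm
    have h3 := inv_le_one_of_one_le₀ h1
    have h4 : 0 < (m : ℝ)⁻¹ := by positivity
    have := poch_hasSum s (1 - (m : ℂ)⁻¹) (by
      rw [show (1 - (m : ℂ)⁻¹) = ((1 - (m : ℝ)⁻¹ : ℝ) : ℂ) by push_cast; rfl, Complex.norm_real,
        Real.norm_eq_abs, abs_of_nonneg (by linarith)]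
      linarith)
    rw [sub_sub_cancel, Complex.inv_cpow _ _ (by
      rw [Complex.natCast_arg]; exact Real.pi_pos.ne)] at this
    rwa [Complex.cpow_neg]
  have := (key (2 * j + 1) (by omega)).sub (key (2 * j + 2) (by omega))
  have e1 : (fun n => pochNewton n s * -(stepR n j : ℂ)) =
      fun n => pochNewton n s * (1 - ((2 * j + 1 : ℕ) : ℂ)⁻¹) ^ n -
        pochNewton n s * (1 - ((2 * j + 2 : ℕ) : ℂ)⁻¹) ^ n := by
    funext n
    simp only [stepR]
    push_cast
    ring
  rw [e1]
  exact this

theorem newton_series_zeta (s : ℂ) (hs : 0 < s.re) (hs1 : s ≠ 1)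
    (hs2 : (2 : ℂ) ^ (1 - s) ≠ 1) :
    ∃ L : ℂ,
      Tendsto (fun N : ℕ => ∑ n ∈ Finset.range N,
          (∑ k ∈ Finset.range (n + 1), pochNewton k (n : ℂ) * etaValue k) * pochNewton n s)
        atTop (𝓝 L) ∧
      riemannZeta s = (1 - (2 : ℂ) ^ (1 - s))⁻¹ * L := by
  refine ⟨(1 - (2 : ℂ) ^ (1 - s)) * riemannZeta s, ?_, ?_⟩
  swap
  · rw [inv_mul_cancel_left₀]
    exact sub_ne_zero.2 hs2.symm
  have hE : ∑' j, etaTerm j s = (1 - (2 : ℂ) ^ (1 - s)) * riemannZeta s := by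
    rw [etaSum_eq s hs, etaFn, Function.update_of_ne hs1]
  have hf : Summable (Function.uncurry fun n j : ℕ => pochNewton n s * -(stepR n j : ℂ)) := by
    apply Summable.of_norm
    have hnorm : ∀ n j : ℕ, ‖pochNewton n s * -(stepR n j : ℂ)‖ = ‖pochNewton n s‖ * stepR n j := by
      intro n j
      rw [norm_mul, norm_neg, Complex.norm_real, Real.norm_eq_abs, abs_of_nonneg (stepR_nonneg n j)]
    rw [summable_prod_of_nonneg (fun _ => norm_nonneg _)]
    simp only [Function.uncurry_apply_pair, hnorm, tsum_mul_left]
    refine ⟨fun n => (stepR_summable n).mul_left _, ?_⟩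
    refine Summable.of_nonneg_of_le
      (fun n => mul_nonneg (norm_nonneg _) (tsum_nonneg (stepR_nonneg n))) (fun n => ?_)
      (poch_summable s hs)
    exact mul_le_of_le_one_right (norm_nonneg _) (stepR_tsum_le n)
  have hcomm := hf.tsum_comm
  have hsum1 := hf.prod
  simp only [Function.uncurry_apply_pair] at hsum1
  have hrow : ∀ n, ∑' j, pochNewton n s * -(stepR n j : ℂ) = pochNewton n s *
      (∑ k ∈ Finset.range (n + 1), pochNewton k (n : ℂ) * etaValue k - 1 / 2) :=
    fun n => ((coeff_hasSum n).mul_left _).tsum_eq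
  have hcol : ∀ j, ∑' n, pochNewton n s * -(stepR n j : ℂ) = etaTerm j s :=
    fun j => (etaTerm_hasSum s j).tsum_eq
  have h1 := hsum1.hasSum
  simp only [hrow, hcol] at h1 hcomm
  rw [← hcomm, hE] at h1
  have h2 := h1.add ((poch_sum_zero s hs).mul_right (1 / 2))
  rw [zero_mul, add_zero] at h2
  refine h2.tendsto_sum_nat.congr fun N => Finset.sum_congr rfl fun n _ => ?_
  ring
end
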